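/- arXiv:2005.11792 — 3 statements merged into one kernel-verified Lean document; each statement's English description precedes it below -/
import Mathlib

section
/- Let π* be an optimal assignment for weights w and let δ be an allowable perturbation for (w, π*). If δ' is another perturbation satisfying δ'(a,b) ≤ δ(a,b) for every edge (a,b) assigned in π* and δ'(a,b) ≥ δ(a,b) for every edge (a,b) not assigned in π*, then δ' is an allowable perturbation for (w, π*). -/
open Finset Filter Topology

/-- Cost of an assignment `π : T → A` under weights `w : A × T → ℝ`. -/
noncomputable def cost {A T : Type*} [Fintype T] (w : A × T → ℝ) (π : T → A) : ℝ :=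
  ∑ b : T, w (π b, b)

/-- `πs` is an optimal assignment for weights `w`: it is injective (an assignment)
and minimizes the cost among all assignments. -/
def Optimal {A T : Type*} [Fintype T] (w : A × T → ℝ) (πs : T → A) : Prop :=
  Function.Injective πs ∧ ∀ π : T → A, Function.Injective π → cost w πs ≤ cost w π

/-- `δ` is an allowable perturbation for `(w, πs)`: `πs` remains optimal for `w + δ`. -/
def Allowable {A T : Type*} [Fintype T] (w δ : A × T → ℝ) (πs : T → A) : Prop :=
  Optimal (w + δ) πs

/-!
Optimality of a fixed assignment is preserved when weights are added. The change `δ' - δ` is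
nonpositive on assigned edges and nonnegative elsewhere, so the assigned edge minimizes it at
each task. Hence `πs` is optimal for `δ' - δ`, and for `w + δ' = (w + δ) + (δ' - δ)`.
-/

theorem sub_assigned_le_sub_of_le_assigned_of_le_unassigned {A T G : Type*} [AddGroup G]
    [Preorder G] [AddRightMono G] {δ δ' : A × T → G} {π : T → A}
    (h_assigned : ∀ a b, π b = a → δ' (a, b) ≤ δ (a, b))
    (h_unassigned : ∀ a b, π b ≠ a → δ (a, b) ≤ δ' (a, b)) (a : A) (b : T) :
    δ' (π b, b) - δ (π b, b) ≤ δ' (a, b) - δ (a, b) := by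
  obtain rfl | hab := eq_or_ne (π b) a
  · rfl
  · exact (sub_nonpos.2 (h_assigned _ b rfl)).trans (sub_nonneg.2 (h_unassigned a b hab))

section Optimal

variable {A T : Type*} [Fintype T] {v w : A × T → ℝ} {π : T → A}

theorem cost_add (v w : A × T → ℝ) (π : T → A) : cost (v + w) π = cost v π + cost w π :=
  Finset.sum_add_distrib

theorem Optimal.add (hv : Optimal v π) (hw : Optimal w π) : Optimal (v + w) π := by
  refine ⟨hv.1, fun ρ hρ ↦ ?_⟩
  rw [cost_add, cost_add]
  exact add_le_add (hv.2 ρ hρ) (hw.2 ρ hρ)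

theorem optimal_of_forall_le (hπ : Function.Injective π) (h : ∀ a b, w (π b, b) ≤ w (a, b)) :
    Optimal w π :=
  ⟨hπ, fun ρ _ ↦ Finset.sum_le_sum fun b _ ↦ h (ρ b) b⟩

end Optimal

theorem stmt0_general {A T : Type*} [Fintype T] {w δ δ' : A × T → ℝ} {πs : T → A}
    (hδ : Allowable w δ πs)
    (h : ∀ a b, δ' (πs b, b) - δ (πs b, b) ≤ δ' (a, b) - δ (a, b)) :
    Allowable w δ' πs := by
  have h_change : Optimal (δ' - δ) πs := optimal_of_forall_le hδ.1 h
  have h_split : w + δ' = w + δ + (δ' - δ) := by abel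
  rw [Allowable, h_split]
  exact hδ.add h_change

theorem stmt0 {A T : Type*} [Fintype A] [Fintype T] [Nonempty A] [Nonempty T]
    (hAT : Fintype.card T ≤ Fintype.card A)
    (w δ δ' : A × T → ℝ) (πs : T → A)
    (hopt : Optimal w πs)
    (hδ : Allowable w δ πs)
    (h1 : ∀ a b, πs b = a → δ' (a, b) ≤ δ (a, b))
    (h2 : ∀ a b, πs b ≠ a → δ (a, b) ≤ δ' (a, b)) :
    Allowable w δ' πs :=
  stmt0_general hδ (sub_assigned_le_sub_of_le_assigned_of_le_unassigned h1 h2)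
end

section
/- Let π* be an optimal assignment for weights w. Then the set of allowable perturbations for (w, π*), regarded as a subset of the space of functions A × T → ℝ with the product topology, is closed and convex. -/
open Finset Filter Topology

/- For a fixed assignment `π` the cost is a continuous linear functional of the weights. Hence the
weights for which `πs` is optimal form an intersection of closed half-spaces, one for each competing
assignment, and the allowable perturbations are the translate of this intersection by `-w`. -/

section

variable {A T : Type*} [Fintype T]

/-- The cost of a fixed `π : T → A` as a continuous linear functional of the weights, for the
product topology; `π` need not be injective. It makes optimality of an assignment a system of
linear inequalities in the weights. -/
noncomputable def costCLM (π : T → A) : (A × T → ℝ) →L[ℝ] ℝ :=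
  ∑ b : T, ContinuousLinearMap.proj (π b, b)

theorem costCLM_apply (π : T → A) (w : A × T → ℝ) : costCLM π w = cost w π := by
  simp [costCLM, cost]

theorem setOf_optimal_eq_iInter_halfSpace {πs : T → A} (hπs : Function.Injective πs) :
    {w : A × T → ℝ | Optimal w πs} =
      ⋂ (π : T → A) (_ : Function.Injective π), {w | (costCLM πs - costCLM π) w ≤ 0} := by
  ext w
  simp [Optimal, hπs, costCLM_apply]

theorem isClosed_setOf_optimal {πs : T → A} (hπs : Function.Injective πs) :
    IsClosed {w : A × T → ℝ | Optimal w πs} := by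
  rw [setOf_optimal_eq_iInter_halfSpace hπs]
  exact isClosed_iInter fun π => isClosed_iInter fun _ =>
    isClosed_le (costCLM πs - costCLM π).continuous continuous_const

theorem convex_setOf_optimal {πs : T → A} (hπs : Function.Injective πs) :
    Convex ℝ {w : A × T → ℝ | Optimal w πs} := by
  rw [setOf_optimal_eq_iInter_halfSpace hπs]
  exact convex_iInter₂ fun π _ =>
    convex_halfSpace_le (costCLM πs - costCLM π).toLinearMap.isLinear 0

theorem stmt9_general (w : A × T → ℝ) {πs : T → A} (hπs : Function.Injective πs) :
    IsClosed {δ : A × T → ℝ | Allowable w δ πs} ∧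
    Convex ℝ {δ : A × T → ℝ | Allowable w δ πs} :=
  ⟨(isClosed_setOf_optimal hπs).preimage (continuous_const_add w),
    (convex_setOf_optimal hπs).translate_preimage_right w⟩

end

theorem stmt9 {A T : Type*} [Fintype A] [Fintype T] [Nonempty A] [Nonempty T]
    (hAT : Fintype.card T ≤ Fintype.card A)
    (w : A × T → ℝ) (πs : T → A)
    (hopt : Optimal w πs) :
    IsClosed {δ : A × T → ℝ | Allowable w δ πs} ∧
    Convex ℝ {δ : A × T → ℝ | Allowable w δ πs} :=
  stmt9_general w hopt.1
end

section
/- Let π* be an optimal assignment for weights w and let Δ^k be the iterates of the recursive sensitivity algorithm. Then the element-wise sensitivities along the iterates converge to zero: for every edge (a,b), s_{w+Δ^k}(a,b) → 0 as k → ∞. -/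
open Finset Filter Topology

-- The element-wise sensitivity of edge `(a, b)` for weights `w` and assignment `πs`.
open Classical in
noncomputable def sens {A T : Type*} [Fintype T] (w : A × T → ℝ) (πs : T → A)
    (a : A) (b : T) : ℝ :=
  if πs b = a then
    sInf {c | ∃ π : T → A, Function.Injective π ∧ π b ≠ a ∧ cost w π = c} - cost w πs
  else
    cost w πs - sInf {c | ∃ π : T → A, Function.Injective π ∧ π b = a ∧ cost w π = c}

/-- Iterates of the recursive sensitivity algorithm: `Δ⁰ = 0` and
`Δ^{k+1}(a,b) = Δ^k(a,b) + s_{w+Δ^k}(a,b)/(2N)` with `N = |T|`. -/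
noncomputable def iter {A T : Type*} [Fintype T] (w : A × T → ℝ) (πs : T → A) :
    ℕ → (A × T → ℝ)
  | 0 => 0
  | k + 1 => fun e =>
      iter w πs k e + sens (w + iter w πs k) πs e.1 e.2 / (2 * (Fintype.card T : ℝ))

/-!
The excess cost of an assignment `π` over `πs` is nonnegative as long as `πs` stays optimal. One
step of the algorithm lowers it by half the average over the tasks `b` of the differences
`sens (πs b) b - sens (π b) b`. Where `π b ≠ πs b`, optimality of `πs` makes the first sensitivity
at least `0`, the second at most `0`, and both at most the excess in absolute value. Hence a step
lowers the excess, but never below `0`: `πs` stays optimal, the excess converges, and its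
decrements, with the nonnegative sensitivity differences they are made of, tend to `0`. The two
sensitivities in a difference have opposite signs, so each of them tends to `0` as well.
-/

theorem tendsto_sub_succ_of_antitone {α : Type*} [TopologicalSpace α]
    [ConditionallyCompleteLattice α] [InfConvergenceClass α] [AddGroup α] [ContinuousSub α]
    {u : ℕ → α} (hu : Antitone u) (hbdd : BddBelow (Set.range u)) :
    Tendsto (fun k => u k - u (k + 1)) atTop (𝓝 0) := by
  have hlim := tendsto_atTop_ciInf hu hbdd
  simpa only [sub_self] using hlim.sub ((tendsto_add_atTop_iff_nat 1).2 hlim)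

theorem exists_injective_apply_eq {α β : Sort*} {f : α → β} (hf : Function.Injective f)
    (x : α) (y : β) : ∃ g : α → β, Function.Injective g ∧ g x = y := by
  classical
  exact ⟨Equiv.swap (f x) y ∘ f, (Equiv.injective _).comp hf, Equiv.swap_apply_left _ _⟩

section Sensitivity

variable {A T : Type*} [Fintype T] {w : A × T → ℝ} {πs π : T → A} {a : A} {b : T}

/-- The excess cost of the assignment `π` over the reference assignment `πs`, the potential that
the recursive sensitivity algorithm decreases. -/
noncomputable def excess (w : A × T → ℝ) (πs π : T → A) : ℝ :=
  cost w π - cost w πs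

/-- The sensitivity of the edge that `πs` uses at the task `b` minus that of the edge `(a, b)`. In
one step of the algorithm, the excess of an assignment using `(a, b)` loses `1 / (2 * |T|)` times
this amount at `b`. -/
noncomputable def sensGap (w : A × T → ℝ) (πs : T → A) (a : A) (b : T) : ℝ :=
  sens w πs (πs b) b - sens w πs a b

/-- The weights after one step of the recursive sensitivity algorithm started at `w`. Working with
weights rather than perturbations makes the algorithm the iteration of a single map. -/
noncomputable def sensStep (w : A × T → ℝ) (πs : T → A) : A × T → ℝ :=
  fun e => w e + sens w πs e.1 e.2 / (2 * (Fintype.card T : ℝ))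

theorem add_iter_succ (w : A × T → ℝ) (πs : T → A) (k : ℕ) :
    w + iter w πs (k + 1) = sensStep (w + iter w πs k) πs :=
  funext fun _ => (add_assoc _ _ _).symm

theorem excess_sensStep (w : A × T → ℝ) (πs π : T → A) :
    excess (sensStep w πs) πs π =
      excess w πs π - (∑ b, sensGap w πs (π b) b) / (2 * (Fintype.card T : ℝ)) := by
  simp only [excess, cost, sensStep, sensGap, sum_add_distrib, sum_sub_distrib, ← sum_div]
  ring

namespace Optimal

theorem excess_nonneg (h : Optimal w πs) (hπ : Function.Injective π) : 0 ≤ excess w πs π :=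
  sub_nonneg.2 (h.2 π hπ)

theorem sInf_cost_sub_mem_Icc (h : Optimal w πs) {P : (T → A) → Prop}
    (hπ : Function.Injective π) (hP : P π) :
    sInf {c | ∃ ρ : T → A, Function.Injective ρ ∧ P ρ ∧ cost w ρ = c} - cost w πs ∈
      Set.Icc 0 (excess w πs π) := by
  have hlb : cost w πs ∈
      lowerBounds {c | ∃ ρ : T → A, Function.Injective ρ ∧ P ρ ∧ cost w ρ = c} := by
    rintro _ ⟨ρ, hρ, -, rfl⟩
    exact h.2 ρ hρ
  exact ⟨sub_nonneg.2 (le_csInf ⟨_, π, hπ, hP, rfl⟩ hlb),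
    sub_le_sub_right (csInf_le ⟨_, hlb⟩ ⟨π, hπ, hP, rfl⟩) _⟩

theorem sens_assigned_mem_Icc (h : Optimal w πs) (hπ : Function.Injective π) (hb : π b ≠ πs b) :
    sens w πs (πs b) b ∈ Set.Icc 0 (excess w πs π) := by
  rw [sens, if_pos rfl]
  exact h.sInf_cost_sub_mem_Icc hπ hb

theorem neg_sens_unassigned_mem_Icc (h : Optimal w πs) (hπ : Function.Injective π)
    (hb : π b ≠ πs b) : -sens w πs (π b) b ∈ Set.Icc 0 (excess w πs π) := by
  rw [sens, if_neg hb.symm, neg_sub]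
  exact h.sInf_cost_sub_mem_Icc hπ rfl

theorem sens_assigned_nonneg [Nontrivial A] (h : Optimal w πs) (b : T) :
    0 ≤ sens w πs (πs b) b := by
  obtain ⟨a, ha⟩ := exists_ne (πs b)
  obtain ⟨π, hπ, rfl⟩ := exists_injective_apply_eq h.1 b a
  exact (h.sens_assigned_mem_Icc hπ ha).1

theorem sens_unassigned_nonpos (h : Optimal w πs) (ha : a ≠ πs b) : sens w πs a b ≤ 0 := by
  obtain ⟨π, hπ, rfl⟩ := exists_injective_apply_eq h.1 b a
  exact neg_nonneg.1 (h.neg_sens_unassigned_mem_Icc hπ ha).1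

theorem sensGap_mem_Icc (h : Optimal w πs) (hπ : Function.Injective π) (b : T) :
    sensGap w πs (π b) b ∈ Set.Icc 0 (2 * excess w πs π) := by
  rw [sensGap, sub_eq_add_neg, two_mul]
  by_cases hb : π b = πs b
  · have hexcess := h.excess_nonneg hπ
    rw [hb, add_neg_cancel]
    exact ⟨le_rfl, add_nonneg hexcess hexcess⟩
  · obtain ⟨hs_nonneg, hs_le⟩ := h.sens_assigned_mem_Icc hπ hb
    obtain ⟨hu_nonneg, hu_le⟩ := h.neg_sens_unassigned_mem_Icc hπ hb
    exact ⟨add_nonneg hs_nonneg hu_nonneg, add_le_add hs_le hu_le⟩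

theorem sensGap_nonneg (h : Optimal w πs) (a : A) (b : T) : 0 ≤ sensGap w πs a b := by
  obtain ⟨π, hπ, rfl⟩ := exists_injective_apply_eq h.1 b a
  exact (h.sensGap_mem_Icc hπ b).1

protected theorem sensStep (h : Optimal w πs) : Optimal (sensStep w πs) πs := by
  refine ⟨h.1, fun π hπ => sub_nonneg.1 ?_⟩
  have hsum : ∑ b, sensGap w πs (π b) b ≤ excess w πs π * (2 * Fintype.card T) :=
    calc
      ∑ b, sensGap w πs (π b) b ≤ ∑ _b : T, 2 * excess w πs π :=
        sum_le_sum fun b _ => (h.sensGap_mem_Icc hπ b).2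
      _ = excess w πs π * (2 * Fintype.card T) := by
        rw [sum_const, card_univ, nsmul_eq_mul]
        ring
  have hloss := div_le_of_le_mul₀ (by positivity) (h.excess_nonneg hπ) hsum
  calc
    0 ≤ excess w πs π - (∑ b, sensGap w πs (π b) b) / (2 * Fintype.card T) := sub_nonneg.2 hloss
    _ = excess (sensStep w πs) πs π := (excess_sensStep w πs π).symm

theorem allowable_iter (h : Optimal w πs) (k : ℕ) : Allowable w (iter w πs k) πs := by
  induction k with
  | zero => simpa only [Allowable, iter, add_zero] using h
  | succ k ih =>
    rw [Allowable, add_iter_succ]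
    exact Optimal.sensStep ih

theorem antitone_excess_iter (h : Optimal w πs) (π : T → A) :
    Antitone fun k => excess (w + iter w πs k) πs π := by
  refine antitone_nat_of_succ_le fun k => ?_
  rw [add_iter_succ, excess_sensStep]
  exact sub_le_self _ (div_nonneg
    (sum_nonneg fun b _ => sensGap_nonneg (h.allowable_iter k) (π b) b) (by positivity))

theorem sensGap_le_excess_sub_excess_sensStep (h : Optimal w πs) (π : T → A) (b : T) :
    sensGap w πs (π b) b ≤
      (excess w πs π - excess (sensStep w πs) πs π) * (2 * Fintype.card T) := by
  have : Nonempty T := ⟨b⟩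
  rw [excess_sensStep, sub_sub_cancel, div_mul_cancel₀ _ (by positivity)]
  exact single_le_sum (f := fun b => sensGap w πs (π b) b)
    (fun b _ => h.sensGap_nonneg (π b) b) (mem_univ b)

theorem tendsto_sensGap_iter (h : Optimal w πs) (a : A) (b : T) :
    Tendsto (fun k => sensGap (w + iter w πs k) πs a b) atTop (𝓝 0) := by
  obtain ⟨π, hπ, rfl⟩ := exists_injective_apply_eq h.1 b a
  have hbdd : BddBelow (Set.range fun k => excess (w + iter w πs k) πs π) :=
    ⟨0, Set.forall_mem_range.2 fun k => excess_nonneg (h.allowable_iter k) hπ⟩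
  have hdecr := (tendsto_sub_succ_of_antitone (h.antitone_excess_iter π) hbdd).mul_const
    (2 * (Fintype.card T : ℝ))
  rw [zero_mul] at hdecr
  refine squeeze_zero (fun k => sensGap_nonneg (h.allowable_iter k) (π b) b) (fun k => ?_) hdecr
  rw [add_iter_succ]
  exact sensGap_le_excess_sub_excess_sensStep (h.allowable_iter k) π b

theorem tendsto_sens_assigned_iter [Nontrivial A] (h : Optimal w πs) (b : T) :
    Tendsto (fun k => sens (w + iter w πs k) πs (πs b) b) atTop (𝓝 0) := by
  obtain ⟨a, ha⟩ := exists_ne (πs b)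
  refine squeeze_zero (fun k => sens_assigned_nonneg (h.allowable_iter k) b) (fun k => ?_)
    (h.tendsto_sensGap_iter a b)
  exact (le_sub_self_iff _).2 (sens_unassigned_nonpos (h.allowable_iter k) ha)

end Optimal

end Sensitivity

theorem stmt16_general {A T : Type*} [Nontrivial A] [Fintype T] (w : A × T → ℝ) (πs : T → A)
    (hopt : Optimal w πs) (a : A) (b : T) :
    Tendsto (fun k => sens (w + iter w πs k) πs a b) atTop (𝓝 0) := by
  have hassigned := hopt.tendsto_sens_assigned_iter b
  simpa only [sensGap, sub_sub_cancel, sub_zero] using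
    hassigned.sub (hopt.tendsto_sensGap_iter a b)

theorem stmt16 {A T : Type*} [Fintype A] [Fintype T] [Nonempty A] [Nonempty T]
    (hT : 2 ≤ Fintype.card T) (hAT : Fintype.card T ≤ Fintype.card A)
    (w : A × T → ℝ) (πs : T → A)
    (hopt : Optimal w πs) :
    ∀ a b, Tendsto (fun k => sens (w + iter w πs k) πs a b) atTop (𝓝 0) := by
  have : Nontrivial T := Fintype.one_lt_card_iff_nontrivial.1 hT
  have : Nontrivial A := hopt.1.nontrivial
  exact stmt16_general w πs hopt
end
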